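/- arXiv:2601.00377 — 6 statements merged into one kernel-verified Lean document; each statement's English description precedes it below -/
import Mathlib

section
/- Let m, r ≥ 1, let L ∈ ℝ^{m×m} be symmetric with L·𝟙 = 0 (𝟙 ∈ ℝ^m the all-ones vector), and let λ₂ > 0 satisfy vᵀLv ≥ λ₂‖v‖₂² for every v ∈ ℝ^m with Σ_j v_j = 0. Let A, Â ∈ ℝ^{m×r} and set Δ = Â − A. If Σ_{l=1}^r (1/m)(Σ_{j=1}^m Δ_{jl})² ≤ (1/2) Σ_{l=1}^r Σ_{j=1}^m Δ_{jl}², then tr(Âᵀ L Â) − tr(Aᵀ L A) ≥ (λ₂/2)‖Δ‖_F² − 2‖L A‖_F ‖Δ‖_F. -/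
open Matrix

/-- The Euclidean (ℓ²) norm of a real vector. -/
noncomputable def euclNorm {n : Type*} [Fintype n] (v : n → ℝ) : ℝ :=
  Real.sqrt (∑ i, (v i) ^ 2)

/-- The Frobenius norm of a real matrix. -/
noncomputable def frobNorm {m n : Type*} [Fintype m] [Fintype n] (A : Matrix m n ℝ) : ℝ :=
  Real.sqrt (∑ i, ∑ j, (A i j) ^ 2)

lemma col_gap {m : ℕ} (hm : 1 ≤ m) (L : Matrix (Fin m) (Fin m) ℝ) (hLsymm : Lᵀ = L)
    (hLone : L.mulVec (fun _ => 1) = 0) (lam : ℝ)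
    (hgap : ∀ v : Fin m → ℝ, (∑ j, v j) = 0 → lam * euclNorm v ^ 2 ≤ v ⬝ᵥ L.mulVec v)
    (v : Fin m → ℝ) :
    lam * (∑ j, v j ^ 2 - 1 / (m : ℝ) * (∑ j, v j) ^ 2) ≤ v ⬝ᵥ L.mulVec v := by
  have hm0 : (m : ℝ) ≠ 0 := by positivity
  obtain ⟨c, hc⟩ : ∃ c : ℝ, c = (∑ j, v j) / m := ⟨_, rfl⟩
  have hS : ∑ j, v j = m * c := by rw [hc]; field_simp
  have h := hgap (v - c • (fun _ => 1)) (by simp [Finset.sum_sub_distrib, hS])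
  have hone : (fun _ => (1 : ℝ)) ⬝ᵥ L.mulVec v = 0 := by
    rw [dotProduct_mulVec, ← mulVec_transpose, hLsymm, hLone, zero_dotProduct]
  rw [mulVec_sub, mulVec_smul, hLone, smul_zero, sub_zero, sub_dotProduct, smul_dotProduct,
    hone, smul_zero, sub_zero, euclNorm, Real.sq_sqrt (by positivity)] at h
  convert h using 2
  have : ∀ j, (v - c • (fun _ => 1 : Fin m → ℝ)) j ^ 2 = v j ^ 2 - 2 * c * v j + c ^ 2 := by
    intro j; simp; ring
  simp only [this, Finset.sum_add_distrib, Finset.sum_sub_distrib, ← Finset.mul_sum, hS]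
  simp
  field_simp
  ring

lemma frob_cs {m n : Type*} [Fintype m] [Fintype n] (B D : Matrix m n ℝ) :
    -(frobNorm B * frobNorm D) ≤ Matrix.trace (Dᵀ * B) := by
  have e : Matrix.trace (Dᵀ * B) = ∑ p : m × n, B p.1 p.2 * D p.1 p.2 := by
    rw [Fintype.sum_prod_type, Finset.sum_comm]
    simp [Matrix.trace, Matrix.mul_apply, mul_comm]
  have h := Real.sum_mul_le_sqrt_mul_sqrt Finset.univ (fun p : m × n => - B p.1 p.2)
    (fun p => D p.1 p.2)
  simp only [neg_mul, Finset.sum_neg_distrib, neg_sq] at h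
  rw [e, frobNorm, frobNorm, ← Fintype.sum_prod_type' (fun i j => B i j ^ 2),
    ← Fintype.sum_prod_type' (fun i j => D i j ^ 2)]
  linarith

/-- Lower bound on the difference of graph-regularization terms: if `L` is
symmetric, annihilates the all-ones vector, with a spectral-gap `λ₂ > 0` on
zero-sum vectors, and `Δ = Â − A` satisfies the column-mean domination condition,
then `tr(Âᵀ L Â) − tr(Aᵀ L A) ≥ (λ₂/2)‖Δ‖_F² − 2‖L A‖_F ‖Δ‖_F`. -/
theorem trace_graph_laplacian_difference_lower_bound
    (m r : ℕ) (hm : 1 ≤ m) (hr : 1 ≤ r)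
    (L : Matrix (Fin m) (Fin m) ℝ) (hLsymm : Lᵀ = L)
    (hLone : L.mulVec (fun _ => 1) = 0)
    (lam₂ : ℝ) (hlam₂ : 0 < lam₂)
    (hgap : ∀ v : Fin m → ℝ, (∑ j, v j) = 0 → lam₂ * euclNorm v ^ 2 ≤ v ⬝ᵥ L.mulVec v)
    (A Ahat : Matrix (Fin m) (Fin r) ℝ)
    (hΔ : ∑ l, (1 / (m : ℝ)) * (∑ j, (Ahat - A) j l) ^ 2
            ≤ (1 / 2) * ∑ l, ∑ j, ((Ahat - A) j l) ^ 2) :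
    lam₂ / 2 * frobNorm (Ahat - A) ^ 2 - 2 * frobNorm (L * A) * frobNorm (Ahat - A)
      ≤ Matrix.trace (Ahatᵀ * L * Ahat) - Matrix.trace (Aᵀ * L * A) := by
  obtain ⟨D, hD⟩ : ∃ D, D = Ahat - A := ⟨_, rfl⟩
  have hA : Ahat = A + D := by rw [hD]; abel
  rw [← hD] at hΔ ⊢
  have hcs := frob_cs (L * A) D
  have ht : Matrix.trace (Aᵀ * L * D) = Matrix.trace (Dᵀ * (L * A)) := by
    rw [← Matrix.trace_transpose]
    simp [Matrix.transpose_mul, hLsymm]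
  have hexp : Matrix.trace (Ahatᵀ * L * Ahat) - Matrix.trace (Aᵀ * L * A)
      = Matrix.trace (Dᵀ * L * D) + 2 * Matrix.trace (Dᵀ * (L * A)) := by
    rw [hA]
    simp only [Matrix.transpose_add, Matrix.add_mul, Matrix.mul_add, Matrix.trace_add, ht]
    rw [Matrix.mul_assoc Dᵀ L A]
    ring
  have hq : Matrix.trace (Dᵀ * L * D) = ∑ l, (fun j => D j l) ⬝ᵥ L.mulVec (fun j => D j l) := by
    rw [Matrix.mul_assoc]
    rfl
  have hsum := Finset.sum_le_sum (fun l (_ : l ∈ Finset.univ) =>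
    col_gap hm L hLsymm hLone lam₂ hgap (fun j => D j l))
  rw [← hq, ← Finset.mul_sum, Finset.sum_sub_distrib] at hsum
  have hF : frobNorm D ^ 2 = ∑ l, ∑ j, D j l ^ 2 := by
    rw [frobNorm, Real.sq_sqrt (by positivity), Finset.sum_comm]
  rw [hexp, hF]
  have := mul_le_mul_of_nonneg_left hΔ hlam₂.le
  nlinarith
end

section
/- Let c > 0 and m, p, r₁, r₂, r₃ ≥ 1. Let A₁, Â₁ ∈ ℝ^{m×r₁}, A₂, Â₂ ∈ ℝ^{m×r₂}, and A₃, Â₃ ∈ ℝ^{p×r₃} all have orthonormal columns. Let g and ĝ be vectors indexed by the product type Fin r₁ × Fin r₃ × Fin r₂ (matching the column index of the Kronecker product A₁ ⊗ A₃ ⊗ A₂) whose entries are all bounded in absolute value by c. Then ‖(Â₁ ⊗ Â₃ ⊗ Â₂) ĝ − (A₁ ⊗ A₃ ⊗ A₂) g‖₂² ≤ 2‖ĝ − g‖₂² + 6 c² r₁ r₂ r₃ (‖Â₁ − A₁‖_F² + ‖Â₂ − A₂‖_F² + ‖Â₃ − A₃‖_F²). -/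
open Matrix
open scoped Kronecker

/-- `b` bounds the squared operator norm of `M`. -/
def OpBd {m n : Type*} [Fintype m] [Fintype n] (M : Matrix m n ℝ) (b : ℝ) : Prop :=
  ∀ v : n → ℝ, ∑ i, (M.mulVec v i) ^ 2 ≤ b * ∑ j, (v j) ^ 2

lemma OpBd.kron {m n k l : Type*} [Fintype m] [Fintype n] [Fintype k] [Fintype l]
    {M : Matrix m n ℝ} {N : Matrix k l ℝ} {a b : ℝ} (hM : OpBd M a) (hN : OpBd N b)
    (ha : 0 ≤ a) : OpBd (M ⊗ₖ N) (a * b) := by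
  intro v
  have key : ∀ i j, (M ⊗ₖ N).mulVec v (i, j)
      = M.mulVec (fun x => N.mulVec (fun y => v (x, y)) j) i := by
    intro i j
    simp only [Matrix.mulVec, dotProduct, Fintype.sum_prod_type, kroneckerMap_apply,
      Finset.mul_sum, mul_assoc]
  rw [Fintype.sum_prod_type, Fintype.sum_prod_type]
  simp only [key]
  rw [Finset.sum_comm]
  calc _ ≤ ∑ j, a * ∑ x, (N.mulVec (fun y => v (x, y)) j) ^ 2 :=
        Finset.sum_le_sum fun j _ => hM _
    _ = a * ∑ x, ∑ j, (N.mulVec (fun y => v (x, y)) j) ^ 2 := by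
        rw [← Finset.mul_sum, Finset.sum_comm]
    _ ≤ a * ∑ x, b * ∑ y, (v (x, y)) ^ 2 :=
        mul_le_mul_of_nonneg_left (Finset.sum_le_sum fun x _ => hN _) ha
    _ = _ := by rw [← Finset.mul_sum, mul_assoc]

lemma OpBd.orth {m n : Type*} [Fintype m] [Fintype n] [DecidableEq n]
    {A : Matrix m n ℝ} (h : Aᵀ * A = 1) : OpBd A 1 := by
  intro v
  have : A.mulVec v ⬝ᵥ A.mulVec v = v ⬝ᵥ v := by
    rw [dotProduct_mulVec, ← mulVec_transpose, mulVec_mulVec, h, one_mulVec]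
  simp only [dotProduct, ← pow_two] at this
  rw [this, one_mul]

lemma frob_sq {m n : Type*} [Fintype m] [Fintype n] (A : Matrix m n ℝ) :
    frobNorm A ^ 2 = ∑ i, ∑ j, (A i j) ^ 2 :=
  Real.sq_sqrt (by positivity)

lemma eucl_sq {n : Type*} [Fintype n] (v : n → ℝ) :
    euclNorm v ^ 2 = ∑ i, (v i) ^ 2 :=
  Real.sq_sqrt (by positivity)

lemma OpBd.frob {m n : Type*} [Fintype m] [Fintype n] (A : Matrix m n ℝ) :
    OpBd A (frobNorm A ^ 2) := by
  intro v
  rw [frob_sq, Finset.sum_mul]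
  exact Finset.sum_le_sum fun i _ => Finset.sum_mul_sq_le_sq_mul_sq _ _ _

/-- Kronecker perturbation bound for the sparse Tucker VAR estimator:
`‖(Â₁ ⊗ Â₃ ⊗ Â₂) ĝ − (A₁ ⊗ A₃ ⊗ A₂) g‖₂²
  ≤ 2‖ĝ − g‖₂² + 6 c² r₁ r₂ r₃ (‖Â₁ − A₁‖_F² + ‖Â₂ − A₂‖_F² + ‖Â₃ − A₃‖_F²)`,
where all factor matrices have orthonormal columns and the entries of `g, ĝ`
are bounded by `c`. -/
theorem kronecker_perturbation_sq_bound
    (m p r₁ r₂ r₃ : ℕ) (hm : 1 ≤ m) (hp : 1 ≤ p)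
    (hr₁ : 1 ≤ r₁) (hr₂ : 1 ≤ r₂) (hr₃ : 1 ≤ r₃)
    (c : ℝ) (hc : 0 < c)
    (A₁ Ahat₁ : Matrix (Fin m) (Fin r₁) ℝ)
    (A₂ Ahat₂ : Matrix (Fin m) (Fin r₂) ℝ)
    (A₃ Ahat₃ : Matrix (Fin p) (Fin r₃) ℝ)
    (hA₁ : A₁ᵀ * A₁ = 1) (hAhat₁ : Ahat₁ᵀ * Ahat₁ = 1)
    (hA₂ : A₂ᵀ * A₂ = 1) (hAhat₂ : Ahat₂ᵀ * Ahat₂ = 1)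
    (hA₃ : A₃ᵀ * A₃ = 1) (hAhat₃ : Ahat₃ᵀ * Ahat₃ = 1)
    (g ghat : Fin r₁ × Fin r₃ × Fin r₂ → ℝ)
    (hg : ∀ j, |g j| ≤ c) (hghat : ∀ j, |ghat j| ≤ c) :
    euclNorm ((Ahat₁ ⊗ₖ (Ahat₃ ⊗ₖ Ahat₂)).mulVec ghat
              - (A₁ ⊗ₖ (A₃ ⊗ₖ A₂)).mulVec g) ^ 2
      ≤ 2 * euclNorm (ghat - g) ^ 2
        + 6 * c ^ 2 * ((r₁ : ℝ) * (r₂ : ℝ) * (r₃ : ℝ)) *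
            (frobNorm (Ahat₁ - A₁) ^ 2 + frobNorm (Ahat₂ - A₂) ^ 2
              + frobNorm (Ahat₃ - A₃) ^ 2) := by
  have hG : ∑ j, (g j) ^ 2 ≤ c ^ 2 * ((r₁ : ℝ) * r₂ * r₃) := by
    calc ∑ j, (g j) ^ 2 ≤ ∑ _j : Fin r₁ × Fin r₃ × Fin r₂, c ^ 2 :=
          Finset.sum_le_sum fun j _ => sq_le_sq.mpr (by rw [abs_of_pos hc]; exact hg j)
      _ = _ := by simp; ring
  have b0 := (OpBd.orth hAhat₁).kron ((OpBd.orth hAhat₃).kron (OpBd.orth hAhat₂)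
    zero_le_one) zero_le_one (ghat - g)
  have b1 := (OpBd.frob (Ahat₁ - A₁)).kron ((OpBd.orth hAhat₃).kron (OpBd.orth hAhat₂)
    zero_le_one) (by positivity) g
  have b3 := (OpBd.orth hA₁).kron ((OpBd.frob (Ahat₃ - A₃)).kron (OpBd.orth hAhat₂)
    (by positivity)) zero_le_one g
  have b2 := (OpBd.orth hA₁).kron ((OpBd.orth hA₃).kron (OpBd.frob (Ahat₂ - A₂))
    zero_le_one) zero_le_one g
  rw [eucl_sq, eucl_sq]
  have hK : Ahat₁ ⊗ₖ (Ahat₃ ⊗ₖ Ahat₂) - A₁ ⊗ₖ (A₃ ⊗ₖ A₂)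
      = (Ahat₁ - A₁) ⊗ₖ (Ahat₃ ⊗ₖ Ahat₂) + A₁ ⊗ₖ ((Ahat₃ - A₃) ⊗ₖ Ahat₂)
        + A₁ ⊗ₖ (A₃ ⊗ₖ (Ahat₂ - A₂)) := by
    ext ⟨i, j, k⟩ ⟨i', j', k'⟩
    simp only [Matrix.sub_apply, Matrix.add_apply, kroneckerMap_apply]
    ring
  have hdec : (Ahat₁ ⊗ₖ (Ahat₃ ⊗ₖ Ahat₂)).mulVec ghat - (A₁ ⊗ₖ (A₃ ⊗ₖ A₂)).mulVec g
      = (Ahat₁ ⊗ₖ (Ahat₃ ⊗ₖ Ahat₂)).mulVec (ghat - g)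
        + (((Ahat₁ - A₁) ⊗ₖ (Ahat₃ ⊗ₖ Ahat₂)).mulVec g
          + (A₁ ⊗ₖ ((Ahat₃ - A₃) ⊗ₖ Ahat₂)).mulVec g
          + (A₁ ⊗ₖ (A₃ ⊗ₖ (Ahat₂ - A₂))).mulVec g) := by
    rw [← Matrix.add_mulVec, ← Matrix.add_mulVec, ← hK, Matrix.sub_mulVec, Matrix.mulVec_sub]
    abel
  rw [hdec]
  generalize (Ahat₁ ⊗ₖ (Ahat₃ ⊗ₖ Ahat₂)).mulVec (ghat - g) = u0 at *
  generalize ((Ahat₁ - A₁) ⊗ₖ (Ahat₃ ⊗ₖ Ahat₂)).mulVec g = u1 at *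
  generalize (A₁ ⊗ₖ ((Ahat₃ - A₃) ⊗ₖ Ahat₂)).mulVec g = u3 at *
  generalize (A₁ ⊗ₖ (A₃ ⊗ₖ (Ahat₂ - A₂))).mulVec g = u2 at *
  have hsum : ∑ i, ((u0 + (u1 + u3 + u2)) i) ^ 2
      ≤ 2 * ∑ i, (u0 i) ^ 2 + 6 * (∑ i, (u1 i) ^ 2 + ∑ i, (u3 i) ^ 2 + ∑ i, (u2 i) ^ 2) := by
    rw [← Finset.sum_add_distrib, ← Finset.sum_add_distrib, Finset.mul_sum, Finset.mul_sum,
      ← Finset.sum_add_distrib]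
    refine Finset.sum_le_sum fun i _ => ?_
    simp only [Pi.add_apply]
    nlinarith [sq_nonneg (u0 i - (u1 i + u3 i + u2 i)), sq_nonneg (u1 i - u3 i),
      sq_nonneg (u1 i - u2 i), sq_nonneg (u3 i - u2 i)]
  have c1 := mul_le_mul_of_nonneg_left hG (sq_nonneg (frobNorm (Ahat₁ - A₁)))
  have c2 := mul_le_mul_of_nonneg_left hG (sq_nonneg (frobNorm (Ahat₂ - A₂)))
  have c3 := mul_le_mul_of_nonneg_left hG (sq_nonneg (frobNorm (Ahat₃ - A₃)))
  simp only [one_mul, mul_one] at b0 b1 b2 b3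
  linarith
end

section
/- Let ν ≥ 0, let A₁, Â₁ ∈ ℝ^{m×r₁}, A₂, Â₂ ∈ ℝ^{m×r₂}, A₃, Â₃ ∈ ℝ^{p×r₃} all have orthonormal columns, and let v be a vector indexed by Fin r₁ × Fin r₃ × Fin r₂ with ‖v‖₂ ≤ ν. Then ‖((Â₁ ⊗ Â₃ ⊗ Â₂) − (A₁ ⊗ A₃ ⊗ A₂)) v‖₂ ≤ ν (‖Â₁ − A₁‖_F + ‖Â₂ − A₂‖_F + ‖Â₃ − A₃‖_F). -/
open Matrix
open scoped Kronecker

/-- Squared operator bound. -/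
def SqBd {m n : Type*} [Fintype m] [Fintype n] (A : Matrix m n ℝ) (c : ℝ) : Prop :=
  ∀ x : n → ℝ, ∑ i, (A.mulVec x i) ^ 2 ≤ c * ∑ j, (x j) ^ 2

theorem sqBd_orth {m n : Type*} [Fintype m] [Fintype n] [DecidableEq n] (A : Matrix m n ℝ)
    (h : Aᵀ * A = 1) : SqBd A 1 := by
  intro x
  have : A.mulVec x ⬝ᵥ A.mulVec x = x ⬝ᵥ x := by
    rw [Matrix.dotProduct_mulVec, ← Matrix.mulVec_transpose, Matrix.mulVec_mulVec, h,
      Matrix.one_mulVec]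
  simp only [dotProduct, ← pow_two] at this
  rw [this, one_mul]

theorem sqBd_frob {m n : Type*} [Fintype m] [Fintype n] (A : Matrix m n ℝ) :
    SqBd A (frobNorm A ^ 2) := by
  intro x
  rw [frobNorm, Real.sq_sqrt (by positivity), Finset.sum_mul]
  exact Finset.sum_le_sum fun i _ => Finset.sum_mul_sq_le_sq_mul_sq _ _ _

theorem sqBd_kron {m n p q : Type*} [Fintype m] [Fintype n] [Fintype p] [Fintype q]
    (A : Matrix m n ℝ) (B : Matrix p q ℝ) (a b : ℝ) (ha : 0 ≤ a)
    (hA : SqBd A a) (hB : SqBd B b) : SqBd (A ⊗ₖ B) (a * b) := by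
  intro x
  have key : ∀ i k, (A ⊗ₖ B).mulVec x (i, k)
      = A.mulVec (fun j => B.mulVec (fun l => x (j, l)) k) i := by
    intro i k
    simp only [Matrix.mulVec, dotProduct, Fintype.sum_prod_type, Matrix.kronecker_apply,
      Finset.mul_sum, mul_assoc]
  rw [Fintype.sum_prod_type, Finset.sum_comm, Fintype.sum_prod_type]
  simp only [key]
  calc _ ≤ ∑ k, a * ∑ j, (B.mulVec (fun l => x (j, l)) k) ^ 2 :=
        Finset.sum_le_sum fun k _ => hA _
    _ = a * ∑ j, ∑ k, (B.mulVec (fun l => x (j, l)) k) ^ 2 := by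
        rw [← Finset.mul_sum, Finset.sum_comm]
    _ ≤ a * ∑ j, b * ∑ l, (x (j, l)) ^ 2 :=
        mul_le_mul_of_nonneg_left (Finset.sum_le_sum fun j _ => hB _) ha
    _ = _ := by rw [← Finset.mul_sum, mul_assoc]

theorem euclNorm_eq {n : Type*} [Fintype n] (v : n → ℝ) : euclNorm v = ‖WithLp.toLp 2 v‖ := by
  simp [euclNorm, EuclideanSpace.norm_eq]

theorem euclNorm_add_le {n : Type*} [Fintype n] (v w : n → ℝ) :
    euclNorm (v + w) ≤ euclNorm v + euclNorm w := by
  simp only [euclNorm_eq, WithLp.toLp_add]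
  exact norm_add_le _ _

theorem SqBd.le {m n : Type*} [Fintype m] [Fintype n] {A : Matrix m n ℝ} {f ν : ℝ}
    (h : SqBd A (f ^ 2)) (hf : 0 ≤ f) {v : n → ℝ} (hv : euclNorm v ≤ ν) :
    euclNorm (A.mulVec v) ≤ ν * f := by
  calc euclNorm (A.mulVec v) ≤ Real.sqrt (f ^ 2 * ∑ j, (v j) ^ 2) := Real.sqrt_le_sqrt (h v)
    _ = f * euclNorm v := by
        rw [Real.sqrt_mul (sq_nonneg f), Real.sqrt_sq hf, euclNorm]
    _ ≤ f * ν := mul_le_mul_of_nonneg_left hv hf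
    _ = ν * f := mul_comm _ _

/-- Linear Kronecker perturbation bound: if all six factor matrices have
orthonormal columns and `‖v‖₂ ≤ ν`, then
`‖((Â₁ ⊗ Â₃ ⊗ Â₂) − (A₁ ⊗ A₃ ⊗ A₂)) v‖₂
  ≤ ν (‖Â₁ − A₁‖_F + ‖Â₂ − A₂‖_F + ‖Â₃ − A₃‖_F)`. -/
theorem kronecker_perturbation_linear_bound
    (m p r₁ r₂ r₃ : ℕ) (ν : ℝ) (hν : 0 ≤ ν)
    (A₁ Ahat₁ : Matrix (Fin m) (Fin r₁) ℝ)
    (A₂ Ahat₂ : Matrix (Fin m) (Fin r₂) ℝ)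
    (A₃ Ahat₃ : Matrix (Fin p) (Fin r₃) ℝ)
    (hA₁ : A₁ᵀ * A₁ = 1) (hAhat₁ : Ahat₁ᵀ * Ahat₁ = 1)
    (hA₂ : A₂ᵀ * A₂ = 1) (hAhat₂ : Ahat₂ᵀ * Ahat₂ = 1)
    (hA₃ : A₃ᵀ * A₃ = 1) (hAhat₃ : Ahat₃ᵀ * Ahat₃ = 1)
    (v : Fin r₁ × Fin r₃ × Fin r₂ → ℝ) (hv : euclNorm v ≤ ν) :
    euclNorm (((Ahat₁ ⊗ₖ (Ahat₃ ⊗ₖ Ahat₂)) - (A₁ ⊗ₖ (A₃ ⊗ₖ A₂))).mulVec v)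
      ≤ ν * (frobNorm (Ahat₁ - A₁) + frobNorm (Ahat₂ - A₂) + frobNorm (Ahat₃ - A₃)) := by
  have hd : (Ahat₁ ⊗ₖ (Ahat₃ ⊗ₖ Ahat₂)) - (A₁ ⊗ₖ (A₃ ⊗ₖ A₂))
      = (Ahat₁ - A₁) ⊗ₖ (Ahat₃ ⊗ₖ Ahat₂) + A₁ ⊗ₖ (A₃ ⊗ₖ (Ahat₂ - A₂))
        + A₁ ⊗ₖ ((Ahat₃ - A₃) ⊗ₖ Ahat₂) := by
    ext i j
    simp only [Matrix.sub_apply, Matrix.add_apply, Matrix.kroneckerMap_apply]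
    ring
  rw [hd, Matrix.add_mulVec, Matrix.add_mulVec, mul_add, mul_add]
  have b1 : SqBd ((Ahat₁ - A₁) ⊗ₖ (Ahat₃ ⊗ₖ Ahat₂)) (frobNorm (Ahat₁ - A₁) ^ 2) := by
    have := sqBd_kron _ _ _ _ (sq_nonneg _) (sqBd_frob (Ahat₁ - A₁))
      (sqBd_kron _ _ _ _ zero_le_one (sqBd_orth _ hAhat₃) (sqBd_orth _ hAhat₂))
    simpa only [mul_one] using this
  have b2 : SqBd (A₁ ⊗ₖ (A₃ ⊗ₖ (Ahat₂ - A₂))) (frobNorm (Ahat₂ - A₂) ^ 2) := by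
    have := sqBd_kron _ _ _ _ zero_le_one (sqBd_orth _ hA₁)
      (sqBd_kron _ _ _ _ zero_le_one (sqBd_orth _ hA₃) (sqBd_frob (Ahat₂ - A₂)))
    simpa only [one_mul] using this
  have b3 : SqBd (A₁ ⊗ₖ ((Ahat₃ - A₃) ⊗ₖ Ahat₂)) (frobNorm (Ahat₃ - A₃) ^ 2) := by
    have := sqBd_kron _ _ _ _ zero_le_one (sqBd_orth _ hA₁)
      (sqBd_kron _ _ _ _ (sq_nonneg _) (sqBd_frob (Ahat₃ - A₃)) (sqBd_orth _ hAhat₂))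
    simpa only [one_mul, mul_one] using this
  refine (euclNorm_add_le _ _).trans (add_le_add ((euclNorm_add_le _ _).trans
    (add_le_add ?_ ?_)) ?_)
  · exact b1.le (Real.sqrt_nonneg _) hv
  · exact b2.le (Real.sqrt_nonneg _) hv
  · exact b3.le (Real.sqrt_nonneg _) hv
end

section
/- Let T ≥ 1, and for t = 1,…,T let y_t ∈ ℝ^m and x_t ∈ ℝ^{p·m} (indexed by Fin p × Fin m). Let A₁ ∈ ℝ^{m×r₁}, A₂ ∈ ℝ^{m×r₂}, A₃ ∈ ℝ^{p×r₃} have orthonormal columns, and set K = A₃ ⊗ A₂. For a matrix G ∈ ℝ^{r₁×(r₃·r₂)} (the mode-1 matricized core, with columns indexed by Fin r₃ × Fin r₂) define the partial gradient of the least-squares loss Q(G) = (1/2T) Σ_{t=1}^T ‖y_t − A₁ G Kᵀ x_t‖₂² by ∇Q(G) = (1/T) Σ_{t=1}^T A₁ᵀ (A₁ G Kᵀ x_t − y_t) x_tᵀ K. Then for all G¹, G², ‖∇Q(G¹) − ∇Q(G²)‖_F ≤ L₁ ‖G¹ − G²‖_F, where L₁ = (1/T) Σ_{t=1}^T ‖x_t‖₂².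 -/
open Matrix
open scoped Kronecker

section helpers

theorem frobNorm_eq_norm {m n : Type*} [Fintype m] [Fintype n] (A : Matrix m n ℝ) :
    frobNorm A = (Matrix.frobeniusSeminormedAddCommGroup (m := m) (n := n) (α := ℝ)).norm A := by
  letI := Matrix.frobeniusSeminormedAddCommGroup (m := m) (n := n) (α := ℝ)
  change frobNorm A = ‖A‖
  rw [Matrix.frobenius_norm_def, frobNorm, Real.sqrt_eq_rpow]
  simp

theorem frobNorm_mul_le {l m n : Type*} [Fintype l] [Fintype m] [Fintype n]
    (A : Matrix l m ℝ) (B : Matrix m n ℝ) :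
    frobNorm (A * B) ≤ frobNorm A * frobNorm B := by
  simp only [frobNorm_eq_norm]
  exact Matrix.frobenius_norm_mul A B

theorem frobNorm_sum_le {ι m n : Type*} [Fintype m] [Fintype n] (s : Finset ι)
    (f : ι → Matrix m n ℝ) : frobNorm (∑ t ∈ s, f t) ≤ ∑ t ∈ s, frobNorm (f t) := by
  simp only [frobNorm_eq_norm]
  letI := Matrix.frobeniusSeminormedAddCommGroup (m := m) (n := n) (α := ℝ)
  exact norm_sum_le s f

theorem frobNorm_smul_nonneg {m n : Type*} [Fintype m] [Fintype n] (c : ℝ) (hc : 0 ≤ c)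
    (A : Matrix m n ℝ) : frobNorm (c • A) = c * frobNorm A := by
  unfold frobNorm
  simp only [Matrix.smul_apply, smul_eq_mul, mul_pow, ← Finset.mul_sum]
  rw [Real.sqrt_mul (by positivity), Real.sqrt_sq hc]

theorem frobNorm_vecMulVec_self {n : Type*} [Fintype n] (u : n → ℝ) :
    frobNorm (Matrix.vecMulVec u u) = u ⬝ᵥ u := by
  have h : ∑ i, ∑ j, (Matrix.vecMulVec u u i j) ^ 2 = (u ⬝ᵥ u) ^ 2 := by
    simp only [Matrix.vecMulVec_apply, dotProduct, sq (∑ i, u i * u i), Finset.sum_mul_sum]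
    refine Finset.sum_congr rfl fun i _ => Finset.sum_congr rfl fun j _ => ?_
    ring
  rw [frobNorm, h]
  exact Real.sqrt_sq (Finset.sum_nonneg fun i _ => mul_self_nonneg (u i))

theorem dot_contract {a b : Type*} [Fintype a] [Fintype b] [DecidableEq b]
    (K : Matrix a b ℝ) (hK : Kᵀ * K = 1) (x : a → ℝ) :
    (Kᵀ *ᵥ x) ⬝ᵥ (Kᵀ *ᵥ x) ≤ x ⬝ᵥ x := by
  have h0 : 0 ≤ (x - K *ᵥ (Kᵀ *ᵥ x)) ⬝ᵥ (x - K *ᵥ (Kᵀ *ᵥ x)) :=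
    Finset.sum_nonneg fun i _ => mul_self_nonneg _
  have h1 : ∀ u : b → ℝ, x ⬝ᵥ (K *ᵥ u) = (Kᵀ *ᵥ x) ⬝ᵥ u := fun u => by
    rw [Matrix.dotProduct_mulVec, Matrix.mulVec_transpose]
  have h2 : ∀ u : b → ℝ, (K *ᵥ u) ⬝ᵥ (K *ᵥ u) = u ⬝ᵥ u := fun u => by
    rw [Matrix.dotProduct_mulVec, ← Matrix.mulVec_transpose, Matrix.mulVec_mulVec, hK,
      Matrix.one_mulVec]
  rw [sub_dotProduct, dotProduct_sub, dotProduct_sub, h2,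
    dotProduct_comm (K *ᵥ (Kᵀ *ᵥ x)) x, h1] at h0
  linarith

end helpers

/-- Lipschitz continuity of the gradient of the VAR least-squares loss with respect
to the (matricized) core tensor: with
`∇Q(G) = (1/T) Σ_t A₁ᵀ (A₁ G Kᵀ x_t − y_t) x_tᵀ K`, `K = A₃ ⊗ A₂`, one has
`‖∇Q(G¹) − ∇Q(G²)‖_F ≤ L₁ ‖G¹ − G²‖_F` with `L₁ = (1/T) Σ_t ‖x_t‖₂²`. -/
theorem grad_core_lipschitz
    (T m p r₁ r₂ r₃ : ℕ) (hT : 1 ≤ T)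
    (y : Fin T → Fin m → ℝ) (x : Fin T → Fin p × Fin m → ℝ)
    (A₁ : Matrix (Fin m) (Fin r₁) ℝ) (A₂ : Matrix (Fin m) (Fin r₂) ℝ)
    (A₃ : Matrix (Fin p) (Fin r₃) ℝ)
    (hA₁ : A₁ᵀ * A₁ = 1) (hA₂ : A₂ᵀ * A₂ = 1) (hA₃ : A₃ᵀ * A₃ = 1)
    (K : Matrix (Fin p × Fin m) (Fin r₃ × Fin r₂) ℝ) (hK : K = A₃ ⊗ₖ A₂)
    (gradQ : Matrix (Fin r₁) (Fin r₃ × Fin r₂) ℝ → Matrix (Fin r₁) (Fin r₃ × Fin r₂) ℝ)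
    (hgradQ : ∀ G, gradQ G = (T : ℝ)⁻¹ •
        ∑ t, A₁ᵀ * Matrix.vecMulVec ((A₁ * G * Kᵀ).mulVec (x t) - y t) (x t) * K) :
    ∀ G₁ G₂ : Matrix (Fin r₁) (Fin r₃ × Fin r₂) ℝ,
      frobNorm (gradQ G₁ - gradQ G₂)
        ≤ ((T : ℝ)⁻¹ * ∑ t, euclNorm (x t) ^ 2) * frobNorm (G₁ - G₂) := by
  intro G₁ G₂
  have hKK : Kᵀ * K = 1 := by
    rw [hK, ← Matrix.kroneckerMap_transpose, ← Matrix.mul_kronecker_mul, hA₂, hA₃,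
      Matrix.one_kronecker_one]
  have hterm : ∀ t, A₁ᵀ * Matrix.vecMulVec ((A₁ * G₁ * Kᵀ).mulVec (x t) - y t) (x t) * K
      - A₁ᵀ * Matrix.vecMulVec ((A₁ * G₂ * Kᵀ).mulVec (x t) - y t) (x t) * K
      = (G₁ - G₂) * Matrix.vecMulVec (Kᵀ *ᵥ x t) (Kᵀ *ᵥ x t) := by
    intro t
    rw [← Matrix.sub_mul, ← Matrix.mul_sub, ← Matrix.sub_vecMulVec, sub_sub_sub_cancel_right,
      ← Matrix.sub_mulVec, ← Matrix.sub_mul, ← Matrix.mul_sub, Matrix.mul_vecMulVec,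
      Matrix.vecMulVec_mul, Matrix.mul_vecMulVec, Matrix.mulVec_mulVec, Matrix.mulVec_mulVec,
      ← Matrix.mul_assoc, ← Matrix.mul_assoc, hA₁, Matrix.one_mul, Matrix.mulVec_transpose]
  have hdiff : gradQ G₁ - gradQ G₂ = (T : ℝ)⁻¹ •
      ∑ t, (G₁ - G₂) * Matrix.vecMulVec (Kᵀ *ᵥ x t) (Kᵀ *ᵥ x t) := by
    rw [hgradQ, hgradQ, ← smul_sub, ← Finset.sum_sub_distrib]
    simp only [hterm]
  have hx : ∀ t, euclNorm (x t) ^ 2 = x t ⬝ᵥ x t := fun t => by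
    rw [euclNorm, Real.sq_sqrt (by positivity)]
    simp only [dotProduct, sq]
  rw [hdiff, frobNorm_smul_nonneg _ (by positivity), mul_assoc]
  refine mul_le_mul_of_nonneg_left ?_ (by positivity)
  refine (frobNorm_sum_le _ _).trans ?_
  rw [Finset.sum_mul]
  refine Finset.sum_le_sum fun t _ => ?_
  refine (frobNorm_mul_le _ _).trans ?_
  rw [frobNorm_vecMulVec_self, hx, mul_comm]
  exact mul_le_mul_of_nonneg_right (dot_contract K hKK (x t)) (Real.sqrt_nonneg _)
end

section
/- Let A ∈ ℝ^{m×r₁} with AᵀA = I_{r₁}, let A₃ ∈ ℝ^{p×r₃} with A₃ᵀA₃ = I_{r₃}, let G ∈ ℝ^{r₁×(r₃·r₂)}, let D ∈ ℝ^{m×r₂} be arbitrary, and let x ∈ ℝ^{p·m} (indexed by Fin p × Fin m). Then ‖A G (A₃ ⊗ D)ᵀ x‖₂ ≤ ‖G‖_F ‖D‖_F ‖x‖₂. -/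
open Matrix
open scoped Kronecker

theorem aux_isom {a b : Type*} [Fintype a] [Fintype b] [DecidableEq b] (Q : Matrix a b ℝ)
    (hQ : Qᵀ * Q = 1) (y : b → ℝ) : (Q *ᵥ y) ⬝ᵥ (Q *ᵥ y) = y ⬝ᵥ y := by
  rw [Matrix.dotProduct_mulVec, ← Matrix.mulVec_transpose, Matrix.mulVec_mulVec, hQ,
    Matrix.one_mulVec]

theorem aux_bessel {a b : Type*} [Fintype a] [Fintype b] [DecidableEq b] (Q : Matrix a b ℝ)
    (hQ : Qᵀ * Q = 1) (w : a → ℝ) : (Qᵀ *ᵥ w) ⬝ᵥ (Qᵀ *ᵥ w) ≤ w ⬝ᵥ w := by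
  have h1 := aux_isom Q hQ (Qᵀ *ᵥ w)
  have h2 : w ⬝ᵥ (Q *ᵥ (Qᵀ *ᵥ w)) = (Qᵀ *ᵥ w) ⬝ᵥ (Qᵀ *ᵥ w) := by
    rw [Matrix.dotProduct_mulVec, ← Matrix.mulVec_transpose]
  have h3 : 0 ≤ (w - Q *ᵥ (Qᵀ *ᵥ w)) ⬝ᵥ (w - Q *ᵥ (Qᵀ *ᵥ w)) :=
    Finset.sum_nonneg fun i _ => mul_self_nonneg _
  rw [sub_dotProduct, dotProduct_sub, dotProduct_sub,
    dotProduct_comm (Q *ᵥ (Qᵀ *ᵥ w)) w, h1, h2] at h3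
  linarith

theorem aux_cs {a b : Type*} [Fintype a] [Fintype b] (G : Matrix a b ℝ) (z : b → ℝ) :
    ∑ i, ((G *ᵥ z) i) ^ 2 ≤ (∑ i, ∑ j, (G i j) ^ 2) * ∑ j, (z j) ^ 2 := by
  rw [Finset.sum_mul]
  exact Finset.sum_le_sum fun i _ => Finset.sum_mul_sq_le_sq_mul_sq _ _ _

theorem aux_sq {a : Type*} [Fintype a] (v : a → ℝ) : ∑ i, (v i) ^ 2 = v ⬝ᵥ v := by
  simp [dotProduct, sq]

theorem aux_kron {a b c d : Type*} [Fintype a] [Fintype b] [Fintype c] [Fintype d]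
    [DecidableEq b] (Q : Matrix a b ℝ) (hQ : Qᵀ * Q = 1) (D : Matrix c d ℝ) (x : a × c → ℝ) :
    ∑ k, (((Q ⊗ₖ D)ᵀ *ᵥ x) k) ^ 2 ≤ (∑ i, ∑ j, (D i j) ^ 2) * ∑ k, (x k) ^ 2 := by
  have hz : ∀ k j, ((Q ⊗ₖ D)ᵀ *ᵥ x) (k, j)
      = (Qᵀ *ᵥ (fun i => (Dᵀ *ᵥ (fun l => x (i, l))) j)) k := by
    intro k j
    simp only [Matrix.mulVec, dotProduct, Fintype.sum_prod_type, Matrix.transpose_apply,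
      Matrix.kroneckerMap_apply, Finset.mul_sum, mul_assoc]
  rw [Fintype.sum_prod_type, Finset.sum_comm]
  simp only [hz]
  calc _ ≤ ∑ j, ∑ i, ((Dᵀ *ᵥ (fun l => x (i, l))) j) ^ 2 := by
        refine Finset.sum_le_sum fun j _ => ?_
        rw [aux_sq, aux_sq]
        exact aux_bessel Q hQ _
    _ = ∑ i, ∑ j, ((Dᵀ *ᵥ (fun l => x (i, l))) j) ^ 2 := Finset.sum_comm
    _ ≤ ∑ i, (∑ i, ∑ j, (D i j) ^ 2) * ∑ l, (x (i, l)) ^ 2 := by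
        refine Finset.sum_le_sum fun i _ => ?_
        rw [Finset.sum_comm (f := fun i j => (D i j) ^ 2)]
        exact aux_cs Dᵀ _
    _ = _ := by rw [← Finset.mul_sum, Fintype.sum_prod_type]

/-- Key perturbation inequality: if `A` and `A₃` have orthonormal columns, then for
any `G`, `D`, and vector `x`, `‖A G (A₃ ⊗ D)ᵀ x‖₂ ≤ ‖G‖_F ‖D‖_F ‖x‖₂`. -/
theorem mulVec_kronecker_bound
    (m p r₁ r₂ r₃ : ℕ)
    (A : Matrix (Fin m) (Fin r₁) ℝ) (hA : Aᵀ * A = 1)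
    (A₃ : Matrix (Fin p) (Fin r₃) ℝ) (hA₃ : A₃ᵀ * A₃ = 1)
    (G : Matrix (Fin r₁) (Fin r₃ × Fin r₂) ℝ)
    (D : Matrix (Fin m) (Fin r₂) ℝ)
    (x : Fin p × Fin m → ℝ) :
    euclNorm ((A * G * (A₃ ⊗ₖ D)ᵀ).mulVec x) ≤ frobNorm G * frobNorm D * euclNorm x := by
  unfold euclNorm frobNorm
  rw [← Real.sqrt_mul (by positivity), ← Real.sqrt_mul (by positivity)]
  apply Real.sqrt_le_sqrt
  rw [← Matrix.mulVec_mulVec, ← Matrix.mulVec_mulVec, aux_sq, aux_isom A hA, ← aux_sq, mul_assoc]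
  refine (aux_cs G _).trans ?_
  exact mul_le_mul_of_nonneg_left (aux_kron A₃ hA₃ D x) (by positivity)
end

section
/- Let ϖ, β, c, b, ρ, κ > 0, let s, s̃, R > 0 with s ≤ R, and for i = 1, 2, 3 let α_i > 0, λ_i > 0, l_i ≥ 0, η_i ≥ 0. Let Δ̂ ∈ ℝ^N and Δg ∈ ℝ^q be vectors, ΔA_i real matrices, and S a subset of the index set of Δg. Assume: (a) (ϖ/4)‖Δ̂‖₂² + Σ_i (α_i λ_i/2)‖ΔA_i‖_F² ≤ β‖Δ̂‖₁ + Σ_i 2 α_i l_i ‖ΔA_i‖_F + β Σ_{j∈S} |Δg_j|; (b) ‖Δ̂‖₂² ≤ 2‖Δg‖₂² + 6 c² R (‖ΔA₁‖_F² + ‖ΔA₂‖_F² + ‖ΔA₃‖_F²); (c) α_i λ_i ≥ 6 c² √s · κ for each i; (d) ‖Δ̂‖₁ ≤ √s̃ ‖Δ̂‖₂; (e) Σ_{j∈S} |Δg_j| ≤ b √s ‖Δ̂‖₂; (f) ‖Δg‖₂² ≤ 2√2 · b c √s · ‖Δ̂‖₂; (g) ‖ΔA_i‖_F ≤ 2^{3/2}(η_i/ρ)‖Δ̂‖₂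 for each i. Then ‖Δ̂‖₂ ≤ (4β(√s̃ + b√s) + 8√2 · b c · κ + (2^{9/2}/ρ)(α₁ l₁ η₁ + α₂ l₂ η₂ + α₃ l₃ η₃)) / (ϖ + 2κ√s/R). -/
open Matrix

/-- Deterministic core of the main non-asymptotic error bound: the basic
inequality (a), the Kronecker-perturbation decomposition (b), the
regularization-parameter lower bounds (c), the sparsity comparisons (d)–(f)
and the HOSVD perturbation bounds (g) together imply
`‖Δ̂‖₂ ≤ (4β(√s̃ + b√s) + 8√2·bc·κ + (2^{9/2}/ρ)Σᵢ αᵢlᵢηᵢ) / (ϖ + 2κ√s/R)`. -/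
theorem estimation_error_bound
    (N q : ℕ)
    (ϖ β c b ρ κ s st R : ℝ)
    (hϖ : 0 < ϖ) (hβ : 0 < β) (hc : 0 < c) (hb : 0 < b) (hρ : 0 < ρ) (hκ : 0 < κ)
    (hs : 0 < s) (hst : 0 < st) (hR : 0 < R) (hsR : s ≤ R)
    (α lam l η : Fin 3 → ℝ)
    (hα : ∀ i, 0 < α i) (hlam : ∀ i, 0 < lam i)
    (hl : ∀ i, 0 ≤ l i) (hη : ∀ i, 0 ≤ η i)
    (Δ : Fin N → ℝ) (Δg : Fin q → ℝ)
    (mdim rdim : Fin 3 → ℕ)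
    (ΔA : ∀ i : Fin 3, Matrix (Fin (mdim i)) (Fin (rdim i)) ℝ)
    (S : Finset (Fin q))
    -- (a) basic inequality
    (ha : ϖ / 4 * euclNorm Δ ^ 2 + ∑ i, α i * lam i / 2 * frobNorm (ΔA i) ^ 2
            ≤ β * (∑ j, |Δ j|) + (∑ i, 2 * α i * l i * frobNorm (ΔA i))
              + β * ∑ j ∈ S, |Δg j|)
    -- (b) Kronecker perturbation decomposition
    (hdec : euclNorm Δ ^ 2 ≤ 2 * euclNorm Δg ^ 2
              + 6 * c ^ 2 * R * (frobNorm (ΔA 0) ^ 2 + frobNorm (ΔA 1) ^ 2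
                  + frobNorm (ΔA 2) ^ 2))
    -- (c) regularization parameter lower bound
    (hreg : ∀ i, 6 * c ^ 2 * Real.sqrt s * κ ≤ α i * lam i)
    -- (d) ℓ¹–ℓ² comparison for Δ̂
    (hl1 : (∑ j, |Δ j|) ≤ Real.sqrt st * euclNorm Δ)
    -- (e) support comparison for Δg
    (hsupp : (∑ j ∈ S, |Δg j|) ≤ b * Real.sqrt s * euclNorm Δ)
    -- (f) quadratic comparison for Δg
    (hquad : euclNorm Δg ^ 2 ≤ 2 * Real.sqrt 2 * b * c * Real.sqrt s * euclNorm Δ)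
    -- (g) HOSVD perturbation bounds
    (hhosvd : ∀ i, frobNorm (ΔA i) ≤ 2 * Real.sqrt 2 * (η i / ρ) * euclNorm Δ) :
    euclNorm Δ
      ≤ (4 * β * (Real.sqrt st + b * Real.sqrt s) + 8 * Real.sqrt 2 * b * c * κ
           + 16 * Real.sqrt 2 / ρ
               * (α 0 * l 0 * η 0 + α 1 * l 1 * η 1 + α 2 * l 2 * η 2))
         / (ϖ + 2 * κ * Real.sqrt s / R) := by
  have hD0 : 0 ≤ euclNorm Δ := Real.sqrt_nonneg _
  have hκs : 0 < 2 * κ * Real.sqrt s / R := by positivity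
  have hss : Real.sqrt s * Real.sqrt s = s := Real.mul_self_sqrt hs.le
  simp only [Fin.sum_univ_three] at ha
  generalize euclNorm Δ = D at *
  generalize euclNorm Δg = G at *
  have A : ∀ i, 3 * c ^ 2 * Real.sqrt s * κ * frobNorm (ΔA i) ^ 2
      ≤ α i * lam i / 2 * frobNorm (ΔA i) ^ 2 := fun i =>
    mul_le_mul_of_nonneg_right (by linarith [hreg i]) (sq_nonneg _)
  have B : ∀ i, 2 * α i * l i * frobNorm (ΔA i)
      ≤ 4 * Real.sqrt 2 / ρ * (α i * l i * η i) * D := fun i => by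
    have h := mul_le_mul_of_nonneg_left (hhosvd i)
      (mul_nonneg (mul_nonneg zero_le_two (hα i).le) (hl i))
    refine h.trans (le_of_eq ?_)
    ring
  have C1 := mul_le_mul_of_nonneg_left hl1 hβ.le
  have C2 := mul_le_mul_of_nonneg_left hsupp hβ.le
  have K1 := mul_le_mul_of_nonneg_left hdec hκs.le
  have e1 : 2 * κ * Real.sqrt s / R * (2 * G ^ 2
              + 6 * c ^ 2 * R * (frobNorm (ΔA 0) ^ 2 + frobNorm (ΔA 1) ^ 2
                  + frobNorm (ΔA 2) ^ 2))
      = 2 * κ * Real.sqrt s / R * 2 * G ^ 2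
        + 12 * c ^ 2 * Real.sqrt s * κ * (frobNorm (ΔA 0) ^ 2 + frobNorm (ΔA 1) ^ 2
                  + frobNorm (ΔA 2) ^ 2) := by
    field_simp
    ring
  rw [e1] at K1
  have K2 : 2 * κ * Real.sqrt s / R * 2 * G ^ 2 ≤ 8 * Real.sqrt 2 * b * c * κ * D := by
    have h := mul_le_mul_of_nonneg_left hquad (by positivity : 0 ≤ 2 * κ * Real.sqrt s / R * 2)
    have e2 : 2 * κ * Real.sqrt s / R * 2 * (2 * Real.sqrt 2 * b * c * Real.sqrt s * D)
        = (8 * Real.sqrt 2 * b * c * κ * D) * (s / R) := by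
      have : 8 * Real.sqrt 2 * b * c * κ * D * (s / R)
          = 8 * Real.sqrt 2 * b * c * κ * D * (Real.sqrt s * Real.sqrt s / R) := by rw [hss]
      rw [this]; ring
    rw [e2] at h
    exact h.trans (mul_le_of_le_one_right (by positivity) ((div_le_one hR).2 hsR))
  have P : ∀ i, 0 ≤ α i * l i * η i := fun i =>
    mul_nonneg (mul_nonneg (hα i).le (hl i)) (hη i)
  have P0 := P 0
  have P1 := P 1
  have P2 := P 2
  rw [le_div_iff₀ (by positivity)]
  rcases hD0.eq_or_lt with h0 | hpos
  · rw [← h0, zero_mul]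
    positivity
  · refine le_of_mul_le_mul_right ?_ hpos
    have B0 := B 0
    have B1 := B 1
    have B2 := B 2
    have e4 : 4 * Real.sqrt 2 / ρ = 4 * (Real.sqrt 2 / ρ) := by ring
    have e16 : 16 * Real.sqrt 2 / ρ = 16 * (Real.sqrt 2 / ρ) := by ring
    rw [e4] at B0 B1 B2
    rw [e16]
    clear e1 e4 e16 B hhosvd
    generalize Real.sqrt 2 / ρ = v at *
    generalize 2 * κ * Real.sqrt s / R = u at *
    nlinarith only [ha, C1, C2, K1, K2, A 0, A 1, A 2, B0, B1, B2]
end
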